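/- Let F(x,y) = r·φ(u,s,v,t) be a general spherically symmetric metric on a domain of ℝⁿ. At any point (x,y) with y ≠ 0 where φ is smooth, the Cartan tensor satisfies 2σ₁₂·C_{ijk} = σ₂(h_{ij}s_k + h_{jk}s_i + h_{ki}s_j) + σ₃(h_{ij}t_k + h_{jk}t_i + h_{ki}t_j) + σ₈ s_i s_j s_k + σ₉ t_i t_j t_k + σ₁₀(s_i s_j t_k + s_j s_k t_i + s_k s_i t_j) + σ₁₁(t_i t_j s_k + t_j t_k s_i + t_k t_i s_j) for all indices i,j,k. -/

import Mathlib

/-!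
Write `F = r φ`. Since `C_{ijk} = ¼ ∂³(F²)/∂y^i∂y^j∂y^k`, everything follows from the chain rule
`∂_k f(u,s,v,t) = (f_s s_k + f_t t_k) / r` (`hasPD_ev`) together with the derivatives of `r`,
`r_i`, `s_i`, `t_i`. They give
`F_i = φ r_i + φ_s s_i + φ_t t_i` (`hasPD_Fm`),
`r F_{ij} = σ₁ (δ_{ij} - r_i r_j) + φ_ss s_i s_j + φ_st (s_i t_j + s_j t_i) + φ_tt t_i t_j`
(`hasPD_F1`), and hence `g_{ij} = F F_{ij} + F_i F_j` and `h_{ij} = F F_{ij}`.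
Differentiating `g_{ij}` once more and collecting terms gives the formula; the mixed partial
derivatives of `φ` are brought to a common order by Schwarz's theorem (`pds_pdt`).
-/

noncomputable section

open scoped BigOperators

namespace GSSFinsler

/-- `k`-th standard basis vector of `ℝⁿ`. -/
def bvec (n : ℕ) (k : Fin n) : Fin n → ℝ := Pi.single k 1

/-- Standard inner product on `ℝⁿ`. -/
def ip {n : ℕ} (x y : Fin n → ℝ) : ℝ := ∑ i, x i * y i

/-- Euclidean norm on `ℝⁿ`. -/
def nrm {n : ℕ} (y : Fin n → ℝ) : ℝ := Real.sqrt (ip y y)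

/-! Partial derivative operators on a smooth function of four real variables
`φ = φ(u, s, v, t)`. -/

def pdu (f : ℝ → ℝ → ℝ → ℝ → ℝ) (u s v t : ℝ) : ℝ := deriv (fun z => f z s v t) u
def pds (f : ℝ → ℝ → ℝ → ℝ → ℝ) (u s v t : ℝ) : ℝ := deriv (fun z => f u z v t) s
def pdv (f : ℝ → ℝ → ℝ → ℝ → ℝ) (u s v t : ℝ) : ℝ := deriv (fun z => f u s z t) v
def pdt (f : ℝ → ℝ → ℝ → ℝ → ℝ) (u s v t : ℝ) : ℝ := deriv (fun z => f u s v z) t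

/-- `u := |x|²`. -/
def uu {n : ℕ} (x : Fin n → ℝ) : ℝ := ip x x
/-- `s := ⟨x,y⟩/|y|`. -/
def sc {n : ℕ} (x y : Fin n → ℝ) : ℝ := ip x y / nrm y
/-- `v := ⟨a,x⟩`. -/
def vc {n : ℕ} (a x : Fin n → ℝ) : ℝ := ip a x
/-- `t := ⟨a,y⟩/|y|`. -/
def tc {n : ℕ} (a y : Fin n → ℝ) : ℝ := ip a y / nrm y

/-- Evaluation of a function of `(u,s,v,t)` at the point determined by `(a,x,y)`. -/
def ev {n : ℕ} (f : ℝ → ℝ → ℝ → ℝ → ℝ) (a x y : Fin n → ℝ) : ℝ :=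
  f (uu x) (sc x y) (vc a x) (tc a y)

/-- The general spherically symmetric metric `F(x,y) = |y| φ(u,s,v,t)`. -/
def Fm {n : ℕ} (φ : ℝ → ℝ → ℝ → ℝ → ℝ) (a x y : Fin n → ℝ) : ℝ :=
  nrm y * φ (uu x) (sc x y) (vc a x) (tc a y)

/-- Fundamental tensor `g_{ij} := ½ ∂²(F²)/∂y^i∂y^j`. -/
def gm {n : ℕ} (φ : ℝ → ℝ → ℝ → ℝ → ℝ) (a x y : Fin n → ℝ) (i j : Fin n) : ℝ :=
  (1/2) * fderiv ℝ (fun z => fderiv ℝ (fun w => (Fm φ a x w)^2) z (bvec n j)) y (bvec n i)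

/-- Cartan tensor `C_{ijk} := ½ ∂g_{ij}/∂y^k`. -/
def cart {n : ℕ} (φ : ℝ → ℝ → ℝ → ℝ → ℝ) (a x y : Fin n → ℝ) (i j k : Fin n) : ℝ :=
  (1/2) * fderiv ℝ (fun z => gm φ a x z i j) y (bvec n k)

/-- Angular metric `h_{ij} := g_{ij} − F_{y^i}F_{y^j}`. -/
def ang {n : ℕ} (φ : ℝ → ℝ → ℝ → ℝ → ℝ) (a x y : Fin n → ℝ) (i j : Fin n) : ℝ :=
  gm φ a x y i j -
    fderiv ℝ (fun w => Fm φ a x w) y (bvec n i) *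
      fderiv ℝ (fun w => Fm φ a x w) y (bvec n j)

/-- The fundamental tensor as a matrix. -/
def gMat {n : ℕ} (φ : ℝ → ℝ → ℝ → ℝ → ℝ) (a x y : Fin n → ℝ) :
    Matrix (Fin n) (Fin n) ℝ :=
  Matrix.of fun i j => gm φ a x y i j

/-- The inverse fundamental tensor `g^{ij}`. -/
def gInv {n : ℕ} (φ : ℝ → ℝ → ℝ → ℝ → ℝ) (a x y : Fin n → ℝ) :
    Matrix (Fin n) (Fin n) ℝ :=
  (gMat φ a x y)⁻¹

/-- Mean Cartan torsion `I_k := g^{jl} C_{jlk}`. -/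
def mci {n : ℕ} (φ : ℝ → ℝ → ℝ → ℝ → ℝ) (a x y : Fin n → ℝ) (k : Fin n) : ℝ :=
  ∑ j, ∑ l, gInv φ a x y j l * cart φ a x y j l k

/-- Squared norm `‖I‖² := g^{ij} I_i I_j` of the mean Cartan torsion. -/
def normI2 {n : ℕ} (φ : ℝ → ℝ → ℝ → ℝ → ℝ) (a x y : Fin n → ℝ) : ℝ :=
  ∑ i, ∑ j, gInv φ a x y i j * mci φ a x y i * mci φ a x y j

/-- `s_i := x_i − s·y_i/r`. -/
def sv {n : ℕ} (x y : Fin n → ℝ) (i : Fin n) : ℝ := x i - sc x y * (y i / nrm y)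
/-- `t_i := a_i − t·y_i/r`. -/
def tv {n : ℕ} (a y : Fin n → ℝ) (i : Fin n) : ℝ := a i - tc a y * (y i / nrm y)

/-- `‖𝔖‖² := g^{ij}s_is_j`. -/
def nS2 {n : ℕ} (φ : ℝ → ℝ → ℝ → ℝ → ℝ) (a x y : Fin n → ℝ) : ℝ :=
  ∑ i, ∑ j, gInv φ a x y i j * sv x y i * sv x y j
/-- `‖ℜ‖² := g^{ij}s_it_j`. -/
def nR2 {n : ℕ} (φ : ℝ → ℝ → ℝ → ℝ → ℝ) (a x y : Fin n → ℝ) : ℝ :=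
  ∑ i, ∑ j, gInv φ a x y i j * sv x y i * tv a y j
/-- `‖𝔗‖² := g^{ij}t_it_j`. -/
def nT2 {n : ℕ} (φ : ℝ → ℝ → ℝ → ℝ → ℝ) (a x y : Fin n → ℝ) : ℝ :=
  ∑ i, ∑ j, gInv φ a x y i j * tv a y i * tv a y j

/-! The scalars `σ₁, …, σ₁₁` as functions of `(u,s,v,t)`.  Subscripts on `φ`
denote partial derivatives; `φ_{st}` is `pdt (pds φ)` (first `s`, then `t`),
`φ_{ts}` is `pds (pdt φ)`, etc. -/

def sig1 (φ : ℝ → ℝ → ℝ → ℝ → ℝ) (u s v t : ℝ) : ℝ :=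
  φ u s v t - s * pds φ u s v t - t * pdt φ u s v t

def sig2 (φ : ℝ → ℝ → ℝ → ℝ → ℝ) (u s v t : ℝ) : ℝ :=
  sig1 φ u s v t * pds φ u s v t - s * φ u s v t * pds (pds φ) u s v t -
    t * φ u s v t * pds (pdt φ) u s v t

def sig3 (φ : ℝ → ℝ → ℝ → ℝ → ℝ) (u s v t : ℝ) : ℝ :=
  sig1 φ u s v t * pdt φ u s v t - s * φ u s v t * pdt (pds φ) u s v t -
    t * φ u s v t * pdt (pdt φ) u s v t

def sig4 (φ : ℝ → ℝ → ℝ → ℝ → ℝ) (u s v t : ℝ) : ℝ :=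
  3 * pds φ u s v t * pds (pds φ) u s v t + φ u s v t * pds (pds (pds φ)) u s v t

def sig5 (φ : ℝ → ℝ → ℝ → ℝ → ℝ) (u s v t : ℝ) : ℝ :=
  3 * pdt φ u s v t * pdt (pdt φ) u s v t + φ u s v t * pdt (pdt (pdt φ)) u s v t

def sig6 (φ : ℝ → ℝ → ℝ → ℝ → ℝ) (u s v t : ℝ) : ℝ :=
  2 * pds φ u s v t * pdt (pds φ) u s v t + pdt φ u s v t * pds (pds φ) u s v t +
    φ u s v t * pdt (pds (pds φ)) u s v t

def sig7 (φ : ℝ → ℝ → ℝ → ℝ → ℝ) (u s v t : ℝ) : ℝ :=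
  2 * pdt φ u s v t * pds (pdt φ) u s v t + pds φ u s v t * pdt (pdt φ) u s v t +
    φ u s v t * pds (pdt (pdt φ)) u s v t

def sig8 (φ : ℝ → ℝ → ℝ → ℝ → ℝ) (u s v t : ℝ) : ℝ :=
  φ u s v t * (sig1 φ u s v t * sig4 φ u s v t - 3 * sig2 φ u s v t * pds (pds φ) u s v t)

def sig9 (φ : ℝ → ℝ → ℝ → ℝ → ℝ) (u s v t : ℝ) : ℝ :=
  φ u s v t * (sig1 φ u s v t * sig5 φ u s v t - 3 * sig3 φ u s v t * pdt (pdt φ) u s v t)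

def sig10 (φ : ℝ → ℝ → ℝ → ℝ → ℝ) (u s v t : ℝ) : ℝ :=
  φ u s v t * (sig1 φ u s v t * sig6 φ u s v t - 2 * sig2 φ u s v t * pdt (pds φ) u s v t -
    sig3 φ u s v t * pds (pds φ) u s v t)

def sig11 (φ : ℝ → ℝ → ℝ → ℝ → ℝ) (u s v t : ℝ) : ℝ :=
  φ u s v t * (sig1 φ u s v t * sig7 φ u s v t - 2 * sig3 φ u s v t * pds (pdt φ) u s v t -
    sig2 φ u s v t * pdt (pdt φ) u s v t)

/-- The scalar `H` of Lemma 3.2. -/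
def Hc {n : ℕ} (φ : ℝ → ℝ → ℝ → ℝ → ℝ) (a x y : Fin n → ℝ) : ℝ :=
  ((n : ℝ) + 1) * (ev (pds φ) a x y / ev φ a x y +
      ev (pds (sig1 φ)) a x y / ev (sig1 φ) a x y) +
  nS2 φ a x y * (ev (pds (pds (pds φ))) a x y -
      3 * ev (pds (sig1 φ)) a x y * ev (pds (pds φ)) a x y / ev (sig1 φ) a x y) * ev φ a x y +
  2 * nR2 φ a x y * (ev (pdt (pds (pds φ))) a x y -
      (2 * ev (pds (sig1 φ)) a x y * ev (pdt (pds φ)) a x y +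
        ev (pdt (sig1 φ)) a x y * ev (pds (pds φ)) a x y) / ev (sig1 φ) a x y) * ev φ a x y +
  nT2 φ a x y * (ev (pds (pdt (pdt φ))) a x y -
      (2 * ev (pdt (sig1 φ)) a x y * ev (pds (pdt φ)) a x y +
        ev (pds (sig1 φ)) a x y * ev (pdt (pdt φ)) a x y) / ev (sig1 φ) a x y) * ev φ a x y

/-- The scalar `K` of Lemma 3.2. -/
def Kc {n : ℕ} (φ : ℝ → ℝ → ℝ → ℝ → ℝ) (a x y : Fin n → ℝ) : ℝ :=
  ((n : ℝ) + 1) * (ev (pdt φ) a x y / ev φ a x y +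
      ev (pdt (sig1 φ)) a x y / ev (sig1 φ) a x y) +
  nT2 φ a x y * (ev (pdt (pdt (pdt φ))) a x y -
      3 * ev (pdt (sig1 φ)) a x y * ev (pdt (pdt φ)) a x y / ev (sig1 φ) a x y) * ev φ a x y +
  nS2 φ a x y * (ev (pdt (pds (pds φ))) a x y -
      (2 * ev (pds (sig1 φ)) a x y * ev (pdt (pds φ)) a x y +
        ev (pdt (sig1 φ)) a x y * ev (pds (pds φ)) a x y) / ev (sig1 φ) a x y) * ev φ a x y +
  2 * nR2 φ a x y * (ev (pds (pdt (pdt φ))) a x y -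
      (2 * ev (pdt (sig1 φ)) a x y * ev (pds (pdt φ)) a x y +
        ev (pds (sig1 φ)) a x y * ev (pdt (pdt φ)) a x y) / ev (sig1 φ) a x y) * ev φ a x y

/-- The scalar `M` appearing in the proof of Theorem 1.1. -/
def Mc {n : ℕ} (φ : ℝ → ℝ → ℝ → ℝ → ℝ) (a x y : Fin n → ℝ) : ℝ :=
  ev (sig2 φ) a x y * (ev (sig1 φ) a x y * ((n : ℝ) - 2) * ev φ a x y +
      (ip a a - tc a y ^ 2) * ev φ a x y * ev (pdt (pdt φ)) a x y +
      (vc a x - sc x y * tc a y) * ev φ a x y * ev (pdt (pds φ)) a x y) -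
  ev (sig3 φ) a x y * ((vc a x - sc x y * tc a y) * ev φ a x y * ev (pds (pds φ)) a x y +
      (ip a a - tc a y ^ 2) * ev φ a x y * ev (pdt (pds φ)) a x y) +
  ev (sig10 φ) a x y * (vc a x - sc x y * tc a y) -
  ev (sig11 φ) a x y * (ip a a - tc a y ^ 2)

/-- The scalar `N` appearing in the proof of Theorem 1.1. -/
def Nc {n : ℕ} (φ : ℝ → ℝ → ℝ → ℝ → ℝ) (a x y : Fin n → ℝ) : ℝ :=
  ev (sig2 φ) a x y * ((vc a x - sc x y * tc a y) * ev φ a x y * ev (pdt (pdt φ)) a x y +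
      (uu x - sc x y ^ 2) * ev φ a x y * ev (pdt (pds φ)) a x y) -
  ev (sig3 φ) a x y * (ev (sig1 φ) a x y * ((n : ℝ) - 2) * ev φ a x y +
      (uu x - sc x y ^ 2) * ev φ a x y * ev (pds (pds φ)) a x y +
      (vc a x - sc x y * tc a y) * ev φ a x y * ev (pdt (pds φ)) a x y) +
  ev (sig10 φ) a x y * (uu x - sc x y ^ 2) -
  ev (sig11 φ) a x y * (vc a x - sc x y * tc a y)

end GSSFinsler

namespace GSSFinsler

/-! ### Partial derivatives of smooth functions of four variables -/

/-- Smoothness of a curried function of four real variables. -/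
def Smooth4 (f : ℝ → ℝ → ℝ → ℝ → ℝ) : Prop :=
  ContDiff ℝ (⊤ : ℕ∞) (fun p : ℝ × ℝ × ℝ × ℝ => f p.1 p.2.1 p.2.2.1 p.2.2.2)

/-- The uncurried form of a function of four real variables. -/
def unc (f : ℝ → ℝ → ℝ → ℝ → ℝ) (p : ℝ × ℝ × ℝ × ℝ) : ℝ := f p.1 p.2.1 p.2.2.1 p.2.2.2

lemma Smooth4.unc {f : ℝ → ℝ → ℝ → ℝ → ℝ} (hf : Smooth4 f) : ContDiff ℝ (⊤ : ℕ∞) (unc f) := hf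

lemma Smooth4.hasFDerivAt {f : ℝ → ℝ → ℝ → ℝ → ℝ} (hf : Smooth4 f) (p : ℝ × ℝ × ℝ × ℝ) :
    HasFDerivAt (GSSFinsler.unc f) (fderiv ℝ (GSSFinsler.unc f) p) p :=
  (hf.unc.differentiable (by simp) p).hasFDerivAt

lemma Smooth4.unc_pds {f : ℝ → ℝ → ℝ → ℝ → ℝ} (hf : Smooth4 f) :
    GSSFinsler.unc (pds f) = fun p => fderiv ℝ (GSSFinsler.unc f) p (0, 1, 0, 0) := by
  funext ⟨u, s, v, t⟩
  have h1 : HasDerivAt (fun z : ℝ => ((u, z, v, t) : ℝ × ℝ × ℝ × ℝ)) (0, 1, 0, 0) s :=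
    (hasDerivAt_const s u).prodMk ((hasDerivAt_id s).prodMk
      ((hasDerivAt_const s v).prodMk (hasDerivAt_const s t)))
  exact ((hf.hasFDerivAt (u, s, v, t)).comp_hasDerivAt s h1).deriv

lemma Smooth4.unc_pdt {f : ℝ → ℝ → ℝ → ℝ → ℝ} (hf : Smooth4 f) :
    GSSFinsler.unc (pdt f) = fun p => fderiv ℝ (GSSFinsler.unc f) p (0, 0, 0, 1) := by
  funext ⟨u, s, v, t⟩
  have h1 : HasDerivAt (fun z : ℝ => ((u, s, v, z) : ℝ × ℝ × ℝ × ℝ)) (0, 0, 0, 1) t :=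
    (hasDerivAt_const t u).prodMk ((hasDerivAt_const t s).prodMk
      ((hasDerivAt_const t v).prodMk (hasDerivAt_id t)))
  exact ((hf.hasFDerivAt (u, s, v, t)).comp_hasDerivAt t h1).deriv

lemma Smooth4.fderiv {f : ℝ → ℝ → ℝ → ℝ → ℝ} (hf : Smooth4 f) :
    ContDiff ℝ (⊤ : ℕ∞) (fderiv ℝ (GSSFinsler.unc f)) :=
  hf.unc.fderiv_right (by simp)

lemma Smooth4.pds {f : ℝ → ℝ → ℝ → ℝ → ℝ} (hf : Smooth4 f) : Smooth4 (pds f) := by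
  change ContDiff ℝ _ (GSSFinsler.unc (GSSFinsler.pds f))
  rw [hf.unc_pds]
  exact hf.fderiv.clm_apply contDiff_const

lemma Smooth4.pdt {f : ℝ → ℝ → ℝ → ℝ → ℝ} (hf : Smooth4 f) : Smooth4 (pdt f) := by
  change ContDiff ℝ _ (GSSFinsler.unc (GSSFinsler.pdt f))
  rw [hf.unc_pdt]
  exact hf.fderiv.clm_apply contDiff_const

/-- Schwarz's theorem for the variables `s` and `t`. -/
lemma pds_pdt {f : ℝ → ℝ → ℝ → ℝ → ℝ} (hf : Smooth4 f) : pds (pdt f) = pdt (pds f) := by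
  funext u s v t
  change unc (pds (pdt f)) (u, s, v, t) = unc (pdt (pds f)) (u, s, v, t)
  have hd : DifferentiableAt ℝ (fderiv ℝ (unc f)) (u, s, v, t) :=
    hf.fderiv.differentiable (by simp) _
  have key (w z : ℝ × ℝ × ℝ × ℝ) : fderiv ℝ (fun p => fderiv ℝ (unc f) p w) (u, s, v, t) z =
      fderiv ℝ (fderiv ℝ (unc f)) (u, s, v, t) z w := by
    rw [fderiv_clm_apply hd (differentiableAt_const w)]
    simp
  rw [hf.pdt.unc_pds, hf.pds.unc_pdt, hf.unc_pdt, hf.unc_pds]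
  simp only [key]
  refine (hf.unc.contDiffAt.isSymmSndFDerivAt ?_).eq _ _
  simp only [minSmoothness_of_isRCLikeNormedField]
  exact WithTop.coe_le_coe.mpr (le_top (a := (2 : ℕ∞)))

/-! ### A calculus of coordinate derivatives -/

variable {n : ℕ}

/-- `f` is differentiable at `y`, with `k`-th partial derivative `d`. -/
def HasPD (k : Fin n) (f : (Fin n → ℝ) → ℝ) (y : Fin n → ℝ) (d : ℝ) : Prop :=
  ∃ L : (Fin n → ℝ) →L[ℝ] ℝ, HasFDerivAt f L y ∧ L (bvec n k) = d

namespace HasPD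

variable {k : Fin n} {f g : (Fin n → ℝ) → ℝ} {y : Fin n → ℝ} {c d : ℝ}

lemma fderiv (h : HasPD k f y d) : fderiv ℝ f y (bvec n k) = d := by
  obtain ⟨L, h, rfl⟩ := h
  rw [h.fderiv]

lemma of_eq (h : HasPD k f y d) (e : d = c) : HasPD k f y c := e ▸ h

lemma congr (h : HasPD k f y d) (e : g =ᶠ[nhds y] f) : HasPD k g y d := by
  obtain ⟨L, h, hL⟩ := h
  exact ⟨L, h.congr_of_eventuallyEq e, hL⟩

lemma const (r : ℝ) : HasPD k (fun _ => r) y 0 := ⟨0, hasFDerivAt_const r y, rfl⟩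

lemma coord (i : Fin n) : HasPD k (fun z => z i) y (bvec n k i) :=
  ⟨_, (ContinuousLinearMap.proj (R := ℝ) (φ := fun _ : Fin n => ℝ) i).hasFDerivAt, rfl⟩

lemma add (hf : HasPD k f y c) (hg : HasPD k g y d) : HasPD k (fun z => f z + g z) y (c + d) := by
  obtain ⟨L, h, rfl⟩ := hf
  obtain ⟨M, h', rfl⟩ := hg
  exact ⟨L + M, h.add h', rfl⟩

lemma sub (hf : HasPD k f y c) (hg : HasPD k g y d) : HasPD k (fun z => f z - g z) y (c - d) := by
  obtain ⟨L, h, rfl⟩ := hf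
  obtain ⟨M, h', rfl⟩ := hg
  exact ⟨L - M, h.sub h', rfl⟩

lemma mul (hf : HasPD k f y c) (hg : HasPD k g y d) :
    HasPD k (fun z => f z * g z) y (c * g y + f y * d) := by
  obtain ⟨L, h, rfl⟩ := hf
  obtain ⟨M, h', rfl⟩ := hg
  refine ⟨_, h.mul h', ?_⟩
  simp only [add_apply, smul_apply, smul_eq_mul]
  ring

lemma comp {h : ℝ → ℝ} (hh : HasDerivAt h c (f y)) (hf : HasPD k f y d) :
    HasPD k (fun z => h (f z)) y (c * d) := by
  obtain ⟨L, hL, rfl⟩ := hf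
  exact ⟨_, hh.comp_hasFDerivAt y hL, rfl⟩

lemma div (hf : HasPD k f y c) (hg : HasPD k g y d) (h0 : g y ≠ 0) :
    HasPD k (fun z => f z / g z) y ((c - f y / g y * d) / g y) := by
  simp only [div_eq_mul_inv]
  refine (hf.mul (comp (hasDerivAt_inv h0) hg)).of_eq ?_
  field_simp
  ring

end HasPD

/-! ### Derivatives of `r`, `s`, `t`, `s_i`, `t_i` and of `f(u,s,v,t)` -/

lemma ip_self_pos {y : Fin n → ℝ} (hy : y ≠ 0) : 0 < ip y y := by
  obtain ⟨i, hi⟩ := Function.ne_iff.mp hy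
  exact Finset.sum_pos' (fun j _ => mul_self_nonneg _)
    ⟨i, Finset.mem_univ i, mul_self_pos.mpr hi⟩

lemma nrm_ne {y : Fin n → ℝ} (hy : y ≠ 0) : nrm y ≠ 0 :=
  (Real.sqrt_pos.mpr (ip_self_pos hy)).ne'

lemma HasPD.sum {k : Fin n} {y : Fin n → ℝ} {f : Fin n → (Fin n → ℝ) → ℝ} {d : Fin n → ℝ}
    (h : ∀ i, HasPD k (f i) y (d i)) : HasPD k (fun z => ∑ i, f i z) y (∑ i, d i) := by
  choose L hL e using h
  refine ⟨∑ i, L i, HasFDerivAt.fun_sum fun i _ => hL i, ?_⟩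
  simp [e]

lemma hasPD_ip (k : Fin n) (c y : Fin n → ℝ) : HasPD k (fun z => ip c z) y (c k) := by
  refine (HasPD.sum fun i => (HasPD.const (c i)).mul (HasPD.coord i)).of_eq ?_
  simp [bvec, Pi.single_apply]

lemma hasPD_ip_self (k : Fin n) (y : Fin n → ℝ) : HasPD k (fun z => ip z z) y (2 * y k) := by
  refine (HasPD.sum fun i => (HasPD.coord i).mul (HasPD.coord i)).of_eq ?_
  simp [bvec, Pi.single_apply, Finset.sum_add_distrib, two_mul]

lemma hasPD_nrm (k : Fin n) {y : Fin n → ℝ} (hy : y ≠ 0) :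
    HasPD k (fun z => nrm z) y (y k / nrm y) := by
  refine (HasPD.comp (f := fun z => ip z z) (Real.hasDerivAt_sqrt (ip_self_pos hy).ne')
    (hasPD_ip_self k y)).of_eq ?_
  have := nrm_ne hy
  unfold nrm at *
  field_simp

/-- `r_i := y_i / r`. -/
def rv (y : Fin n → ℝ) (i : Fin n) : ℝ := y i / nrm y

lemma hasPD_rv (k i : Fin n) {y : Fin n → ℝ} (hy : y ≠ 0) :
    HasPD k (fun z => rv z i) y ((bvec n k i - rv y i * rv y k) / nrm y) :=
  (HasPD.coord i).div (hasPD_nrm k hy) (nrm_ne hy)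

/-- `t = ⟨a, y⟩ / r` is the same expression as `s` with `a` in place of `x`, so the lemmas on `sc`
and `sv` also serve for `tc` and `tv`. -/
lemma hasPD_sc (k : Fin n) (x : Fin n → ℝ) {y : Fin n → ℝ} (hy : y ≠ 0) :
    HasPD k (fun z => sc x z) y (sv x y k / nrm y) :=
  (hasPD_ip k x y).div (hasPD_nrm k hy) (nrm_ne hy)

lemma hasPD_sv (k i : Fin n) (x : Fin n → ℝ) {y : Fin n → ℝ} (hy : y ≠ 0) :
    HasPD k (fun z => sv x z i) y
      (-(sv x y k * rv y i + sc x y * (bvec n k i - rv y i * rv y k)) / nrm y) := by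
  refine ((HasPD.const (x i)).sub ((hasPD_sc k x hy).mul (hasPD_rv k i hy))).of_eq ?_
  ring

lemma hasPD_tc (k : Fin n) (a : Fin n → ℝ) {y : Fin n → ℝ} (hy : y ≠ 0) :
    HasPD k (fun z => tc a z) y (tv a y k / nrm y) := hasPD_sc k a hy

lemma hasPD_tv (k i : Fin n) (a : Fin n → ℝ) {y : Fin n → ℝ} (hy : y ≠ 0) :
    HasPD k (fun z => tv a z i) y
      (-(tv a y k * rv y i + tc a y * (bvec n k i - rv y i * rv y k)) / nrm y) :=
  hasPD_sv k i a hy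

lemma hasPD_ev (k : Fin n) {f : ℝ → ℝ → ℝ → ℝ → ℝ} (hf : Smooth4 f) (a x : Fin n → ℝ)
    {y : Fin n → ℝ} (hy : y ≠ 0) :
    HasPD k (fun z => ev f a x z) y
      ((ev (pds f) a x y * sv x y k + ev (pdt f) a x y * tv a y k) / nrm y) := by
  obtain ⟨L, hL, eL⟩ := hasPD_sc k x hy
  obtain ⟨M, hM, eM⟩ := hasPD_tc k a hy
  have h1 : HasFDerivAt (fun z => (uu x, sc x z, vc a x, tc a z)) _ y :=
    (hasFDerivAt_const (uu x) y).prodMk (hL.prodMk ((hasFDerivAt_const (vc a x) y).prodMk hM))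
  refine ⟨_, (hf.hasFDerivAt _).comp y h1, ?_⟩
  have e2 := congrFun hf.unc_pds (uu x, sc x y, vc a x, tc a y)
  have e4 := congrFun hf.unc_pdt (uu x, sc x y, vc a x, tc a y)
  change ev (pds f) a x y = _ at e2
  change ev (pdt f) a x y = _ at e4
  have split : ((0 : ℝ), sv x y k / nrm y, (0 : ℝ), tv a y k / nrm y) =
      (sv x y k / nrm y) • ((0, 1, 0, 0) : ℝ × ℝ × ℝ × ℝ) +
        (tv a y k / nrm y) • ((0, 0, 0, 1) : ℝ × ℝ × ℝ × ℝ) := by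
    simp
  simp only [ContinuousLinearMap.comp_apply, ContinuousLinearMap.prod_apply,
    zero_apply, eL, eM]
  rw [split, map_add, map_smul, map_smul, e2, e4, smul_eq_mul, smul_eq_mul]
  ring

/-! ### Derivatives of `F` -/

/-- The closed form `φ r_i + φ_s s_i + φ_t t_i` of `∂F/∂y^i`. -/
def F1 (φ : ℝ → ℝ → ℝ → ℝ → ℝ) (a x : Fin n → ℝ) (i : Fin n) (y : Fin n → ℝ) : ℝ :=
  ev φ a x y * rv y i + ev (pds φ) a x y * sv x y i + ev (pdt φ) a x y * tv a y i

/-- The closed form of `r ∂²F/∂y^i∂y^j`; here `bvec n i j` is the Kronecker delta. -/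
def F2 (φ : ℝ → ℝ → ℝ → ℝ → ℝ) (a x : Fin n → ℝ) (i j : Fin n) (y : Fin n → ℝ) : ℝ :=
  (ev φ a x y - sc x y * ev (pds φ) a x y - tc a y * ev (pdt φ) a x y) *
      (bvec n i j - rv y i * rv y j) +
    ev (pds (pds φ)) a x y * (sv x y i * sv x y j) +
    ev (pdt (pds φ)) a x y * (sv x y i * tv a y j + sv x y j * tv a y i) +
    ev (pdt (pdt φ)) a x y * (tv a y i * tv a y j)

lemma bvec_symm (i j : Fin n) : bvec n i j = bvec n j i := by
  simp [bvec, Pi.single_apply, eq_comm]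

lemma F2_symm (φ : ℝ → ℝ → ℝ → ℝ → ℝ) (a x : Fin n → ℝ) (i j : Fin n) (y : Fin n → ℝ) :
    F2 φ a x i j y = F2 φ a x j i y := by
  unfold F2
  rw [bvec_symm i j]
  ring

variable {φ : ℝ → ℝ → ℝ → ℝ → ℝ}

lemma hasPD_Fm (hφ : Smooth4 φ) (a x : Fin n → ℝ) {y : Fin n → ℝ} (hy : y ≠ 0) (i : Fin n) :
    HasPD i (fun z => Fm φ a x z) y (F1 φ a x i y) := by
  refine ((hasPD_nrm i hy).mul (hasPD_ev i hφ a x hy)).of_eq ?_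
  have := nrm_ne hy
  unfold F1 rv
  field_simp
  ring

lemma hasPD_F1 (hφ : Smooth4 φ) (a x : Fin n → ℝ) {y : Fin n → ℝ} (hy : y ≠ 0) (i j : Fin n) :
    HasPD i (fun z => F1 φ a x j z) y (F2 φ a x i j y / nrm y) := by
  refine ((((hasPD_ev i hφ a x hy).mul (hasPD_rv i j hy)).add
    ((hasPD_ev i hφ.pds a x hy).mul (hasPD_sv i j x hy))).add
    ((hasPD_ev i hφ.pdt a x hy).mul (hasPD_tv i j a hy))).of_eq ?_
  rw [pds_pdt hφ]
  unfold F2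
  ring

lemma eventually_ne {y : Fin n → ℝ} (hy : y ≠ 0) : ∀ᶠ z in nhds y, z ≠ 0 :=
  isOpen_ne.mem_nhds hy

/-- `g_{ij} = F_i F_j + F F_{ij}`, where `F F_{ij} = φ · (r F_{ij})`. -/
lemma gm_eq (hφ : Smooth4 φ) (a x : Fin n → ℝ) {y : Fin n → ℝ} (hy : y ≠ 0) (i j : Fin n) :
    gm φ a x y i j = F1 φ a x i y * F1 φ a x j y + ev φ a x y * F2 φ a x i j y := by
  have h1 : (fun z => fderiv ℝ (fun w => (Fm φ a x w)^2) z (bvec n j)) =ᶠ[nhds y]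
      fun z => 2 * (Fm φ a x z * F1 φ a x j z) := by
    filter_upwards [eventually_ne hy] with z hz
    simp only [pow_two]
    rw [((hasPD_Fm hφ a x hz j).mul (hasPD_Fm hφ a x hz j)).fderiv]
    ring
  have h2 := ((HasPD.const 2).mul ((hasPD_Fm hφ a x hy i).mul (hasPD_F1 hφ a x hy i j))).congr h1
  have := nrm_ne hy
  rw [gm, h2.fderiv, show Fm φ a x y = nrm y * ev φ a x y from rfl]
  field_simp
  ring

lemma ang_eq (hφ : Smooth4 φ) (a x : Fin n → ℝ) {y : Fin n → ℝ} (hy : y ≠ 0) (i j : Fin n) :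
    ang φ a x y i j = ev φ a x y * F2 φ a x i j y := by
  rw [ang, gm_eq hφ a x hy, (hasPD_Fm hφ a x hy i).fderiv, (hasPD_Fm hφ a x hy j).fderiv]
  ring

/-- The closed form of `r ∂(r F_{ij})/∂y^k`, obtained from `F2` by the product rule. -/
def F3 (φ : ℝ → ℝ → ℝ → ℝ → ℝ) (a x : Fin n → ℝ) (i j k : Fin n) (y : Fin n → ℝ) : ℝ :=
  -(sc x y * (ev (pds (pds φ)) a x y * sv x y k + ev (pdt (pds φ)) a x y * tv a y k) +
      tc a y * (ev (pdt (pds φ)) a x y * sv x y k + ev (pdt (pdt φ)) a x y * tv a y k)) *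
      (bvec n i j - rv y i * rv y j) -
    (ev φ a x y - sc x y * ev (pds φ) a x y - tc a y * ev (pdt φ) a x y) *
      ((bvec n k i - rv y i * rv y k) * rv y j + rv y i * (bvec n k j - rv y j * rv y k)) +
    (ev (pds (pds (pds φ))) a x y * sv x y k + ev (pdt (pds (pds φ))) a x y * tv a y k) *
      (sv x y i * sv x y j) +
    (ev (pdt (pds (pds φ))) a x y * sv x y k + ev (pdt (pdt (pds φ))) a x y * tv a y k) *
      (sv x y i * tv a y j + sv x y j * tv a y i) +
    (ev (pdt (pdt (pds φ))) a x y * sv x y k + ev (pdt (pdt (pdt φ))) a x y * tv a y k) *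
      (tv a y i * tv a y j) -
    (sv x y k * rv y i + sc x y * (bvec n k i - rv y i * rv y k)) *
      (ev (pds (pds φ)) a x y * sv x y j + ev (pdt (pds φ)) a x y * tv a y j) -
    (sv x y k * rv y j + sc x y * (bvec n k j - rv y j * rv y k)) *
      (ev (pds (pds φ)) a x y * sv x y i + ev (pdt (pds φ)) a x y * tv a y i) -
    (tv a y k * rv y i + tc a y * (bvec n k i - rv y i * rv y k)) *
      (ev (pdt (pds φ)) a x y * sv x y j + ev (pdt (pdt φ)) a x y * tv a y j) -
    (tv a y k * rv y j + tc a y * (bvec n k j - rv y j * rv y k)) *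
      (ev (pdt (pds φ)) a x y * sv x y i + ev (pdt (pdt φ)) a x y * tv a y i)

lemma hasPD_F2 (hφ : Smooth4 φ) (a x : Fin n → ℝ) {y : Fin n → ℝ} (hy : y ≠ 0) (i j k : Fin n) :
    HasPD k (fun z => F2 φ a x i j z) y (F3 φ a x i j k y / nrm y) := by
  have hs := hasPD_sc k x hy
  have ht := hasPD_tc k a hy
  have si := hasPD_sv k i x hy
  have sj := hasPD_sv k j x hy
  have ti := hasPD_tv k i a hy
  have tj := hasPD_tv k j a hy
  have e := hasPD_ev k hφ a x hy
  have es := hasPD_ev k hφ.pds a x hy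
  have et := hasPD_ev k hφ.pdt a x hy
  have ess := hasPD_ev k hφ.pds.pds a x hy
  have est := hasPD_ev k hφ.pds.pdt a x hy
  have ett := hasPD_ev k hφ.pdt.pdt a x hy
  rw [pds_pdt hφ] at et
  rw [pds_pdt hφ.pds] at est
  rw [pds_pdt hφ.pdt, pds_pdt hφ] at ett
  refine ((((((e.sub (hs.mul es)).sub (ht.mul et)).mul ((HasPD.const (bvec n i j)).sub
    ((hasPD_rv k i hy).mul (hasPD_rv k j hy)))).add (ess.mul (si.mul sj))).add
    (est.mul ((si.mul tj).add (sj.mul ti)))).add (ett.mul (ti.mul tj))).of_eq ?_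
  unfold F3
  ring

lemma cart_eq (hφ : Smooth4 φ) (a x : Fin n → ℝ) {y : Fin n → ℝ} (hy : y ≠ 0) (i j k : Fin n) :
    2 * nrm y * cart φ a x y i j k =
      F2 φ a x i k y * F1 φ a x j y + F1 φ a x i y * F2 φ a x j k y +
        (ev (pds φ) a x y * sv x y k + ev (pdt φ) a x y * tv a y k) * F2 φ a x i j y +
        ev φ a x y * F3 φ a x i j k y := by
  have h1 : (fun z => gm φ a x z i j) =ᶠ[nhds y]
      fun z => F1 φ a x i z * F1 φ a x j z + ev φ a x z * F2 φ a x i j z := by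
    filter_upwards [eventually_ne hy] with z hz
    exact gm_eq hφ a x hz i j
  have h2 := (((hasPD_F1 hφ a x hy k i).mul (hasPD_F1 hφ a x hy k j)).add
    ((hasPD_ev k hφ a x hy).mul (hasPD_F2 hφ a x hy i j k))).congr h1
  have := nrm_ne hy
  rw [cart, h2.fderiv, F2_symm φ a x k i, F2_symm φ a x k j]
  field_simp
  ring

end GSSFinsler

open GSSFinsler in
/-- The Cartan tensor of a general spherically symmetric
metric satisfies `2σ₁₂ C_{ijk} = σ₂(h_{ij}s_k + …) + … + σ₁₁(…)`. -/
theorem cartan_tensor_formula_general_spherically_symmetric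
    {n : ℕ} (φ : ℝ → ℝ → ℝ → ℝ → ℝ)
    (hφ : ContDiff ℝ (⊤ : ℕ∞) (fun p : ℝ × ℝ × ℝ × ℝ => φ p.1 p.2.1 p.2.2.1 p.2.2.2))
    (a x y : Fin n → ℝ) (hy : y ≠ 0) :
    ∀ i j k : Fin n,
      2 * (nrm y * ev φ a x y * ev (sig1 φ) a x y) * cart φ a x y i j k =
        ev (sig2 φ) a x y *
            (ang φ a x y i j * sv x y k + ang φ a x y j k * sv x y i +
              ang φ a x y k i * sv x y j) +
        ev (sig3 φ) a x y *
            (ang φ a x y i j * tv a y k + ang φ a x y j k * tv a y i +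
              ang φ a x y k i * tv a y j) +
        ev (sig8 φ) a x y * (sv x y i * sv x y j * sv x y k) +
        ev (sig9 φ) a x y * (tv a y i * tv a y j * tv a y k) +
        ev (sig10 φ) a x y *
            (sv x y i * sv x y j * tv a y k + sv x y j * sv x y k * tv a y i +
              sv x y k * sv x y i * tv a y j) +
        ev (sig11 φ) a x y *
            (tv a y i * tv a y j * sv x y k + tv a y j * tv a y k * sv x y i +
              tv a y k * tv a y i * sv x y j) := by
  intro i j k
  have hφ : Smooth4 φ := hφ
  have hC := cart_eq hφ a x hy i j k
  rw [show 2 * (nrm y * ev φ a x y * ev (sig1 φ) a x y) * cart φ a x y i j k =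
    ev φ a x y * ev (sig1 φ) a x y * (2 * nrm y * cart φ a x y i j k) by ring, hC]
  simp only [ang_eq hφ a x hy]
  simp only [F1, F2, F3, ev, sig8, sig9, sig10, sig11, sig7, sig6, sig5, sig4, sig3, sig2, sig1,
    pds_pdt hφ, pds_pdt hφ.pdt, bvec_symm k i, bvec_symm k j]
  ring
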